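/- As b → ∞ one has K(b,{b−1}) = b·log(b) − ζ(2)/(2b) − (3ζ(2)+ζ(3))/(3b²) + O(b^{−3}); that is, there exist constants C > 0 and B such that for every integer b ≥ B, |K(b,{b−1}) − b·log(b) + ζ(2)/(2b) + (3ζ(2)+ζ(3))/(3b²)| ≤ C/b³. -/

import Mathlib

open MeasureTheory Real ENNReal

/-- The digamma function `ψ(x) = d/dx log Γ(x)`. -/
noncomputable def digamma (x : ℝ) : ℝ := deriv (fun y => Real.log (Real.Gamma y)) x

/-- The Kempner sum `K(b,E)`: sum of reciprocals of positive integers whose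
base-`b` digits all avoid the excluded set `E`. -/
noncomputable def kempnerSum (b : ℕ) (E : Finset ℕ) : ℝ :=
  ∑' n : ℕ, if n ≠ 0 ∧ ∀ d ∈ Nat.digits b n, d ∉ E then (n : ℝ)⁻¹ else 0

/-- The measure `μ_{b,E}` on `[0,1)`: the sum, over all finite strings of admissible
digits (digits `< b` not in `E`), of the weighted Dirac mass `b^{-l} δ_{n(X)/b^l}`. -/
noncomputable def kempnerMeasure (b : ℕ) (E : Finset ℕ) : Measure ℝ :=
  Measure.sum (fun X : {l : List ℕ // ∀ d ∈ l, d < b ∧ d ∉ E} =>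
    ((b : ℝ≥0∞) ^ X.1.length)⁻¹ •
      Measure.dirac (((Nat.ofDigits b X.1 : ℕ) : ℝ) / (b : ℝ) ^ X.1.length))

/-- `E₁ = E` if `0 ∉ E`, and `E₁ = (E ∪ {b}) \ {0}` if `0 ∈ E`. -/
def Eone (b : ℕ) (E : Finset ℕ) : Finset ℕ :=
  if 0 ∈ E then insert b (E.erase 0) else E

/-- `ζ(s) = ∑_{k ≥ 1} k⁻ˢ`. -/
noncomputable def zetaVal (s : ℕ) : ℝ := ∑' k : ℕ, (((k : ℝ) + 1) ^ s)⁻¹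

/-- `v_m(d) = ∫_{[0,1)} (d - x)^m dμ_{b,E}(x)`. -/
noncomputable def vMoment (b : ℕ) (E : Finset ℕ) (m : ℕ) (d : ℝ) : ℝ :=
  ∫ x in Set.Ico (0 : ℝ) 1, (d - x) ^ m ∂(kempnerMeasure b E)

/-- Term of the shifted Kempner sum. -/
noncomputable def kw (b m : ℕ) (x : ℝ) : ℝ :=
  if m ≠ 0 ∧ ∀ d ∈ Nat.digits b m, d ∉ ({b - 1} : Finset ℕ) then ((m : ℝ) + x)⁻¹ else 0

/-- Partial shifted Kempner sums. -/
noncomputable def kW (b l : ℕ) (x : ℝ) : ℝ := ∑ m ∈ Finset.range (b ^ l), kw b m x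

/-- One-digit sum. -/
noncomputable def kF (b : ℕ) (x : ℝ) : ℝ := ∑ d ∈ Finset.range (b - 2), ((d : ℝ) + 1 + x)⁻¹

/-- Transfer operator. -/
noncomputable def kT (b : ℕ) (f : ℝ → ℝ) (x : ℝ) : ℝ :=
  (1 / (b : ℝ)) * ∑ a ∈ Finset.range (b - 1), f (((a : ℝ) + x) / b)

lemma sum_range_block (b n : ℕ) (h : ℕ → ℝ) :
    ∑ m ∈ Finset.range (b * n), h m
      = ∑ q ∈ Finset.range n, ∑ a ∈ Finset.range b, h (b * q + a) := by
  induction n with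
  | zero => simp
  | succ n ih => rw [Finset.sum_range_succ, Nat.mul_succ, Finset.sum_range_add, ih]

lemma kw_digit (b q a : ℕ) (hb : 2 ≤ b) (hq : q ≠ 0) (ha : a < b) (x : ℝ) :
    kw b (b * q + a) x = if a = b - 1 then 0 else (1 / (b : ℝ)) * kw b q (((a : ℝ) + x) / b) := by
  have hd : Nat.digits b (b * q + a) = a :: Nat.digits b q := by
    rw [add_comm]
    exact Nat.digits_add b hb a q ha (Or.inr hq)
  have hb0 : (b : ℝ) ≠ 0 := by positivity
  have h0 : b * q + a ≠ 0 := by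
    have : 0 < b * q := Nat.mul_pos (by omega) (Nat.pos_of_ne_zero hq)
    omega
  unfold kw
  rw [hd]
  by_cases h : a = b - 1
  · simp [h]
  · have e : (((b * q + a : ℕ) : ℝ) + x)⁻¹ = (1 / (b : ℝ)) * ((q : ℝ) + ((a : ℝ) + x) / b)⁻¹ := by
      rw [one_div, ← mul_inv]
      congr 1
      push_cast
      field_simp
      ring
    simp only [h, if_false, List.forall_mem_cons, Finset.mem_singleton, not_false_eq_true,
      true_and, ne_eq, h0, hq, e]
    split_ifs <;> simp

lemma kw_small (b a : ℕ) (hb : 2 ≤ b) (ha : a < b) (x : ℝ) :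
    kw b a x = if a = 0 ∨ a = b - 1 then 0 else ((a : ℝ) + x)⁻¹ := by
  unfold kw
  by_cases h0 : a = 0
  · simp [h0]
  · rw [Nat.digits_of_lt b a h0 ha]
    by_cases h1 : a = b - 1
    · simp [h1]
    · simp [h0, h1]

lemma kW_rec (b l : ℕ) (hb : 2 ≤ b) (x : ℝ) :
    kW b (l + 1) x = kF b x + kT b (kW b l) x := by
  obtain ⟨k, rfl⟩ : ∃ k, b = k + 2 := ⟨b - 2, by omega⟩
  have hpos : 0 < (k + 2) ^ l := by positivity
  obtain ⟨N, hN⟩ : ∃ N, (k + 2) ^ l = N + 1 := ⟨(k + 2) ^ l - 1, by omega⟩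
  unfold kW kT kF
  rw [pow_succ, mul_comm, sum_range_block, hN, Finset.sum_range_succ']
  rw [add_comm]
  congr 1
  · rw [Finset.sum_range_succ', Finset.sum_range_succ]
    simp only [mul_zero, zero_add]
    rw [kw_small _ 0 hb (by omega), kw_small _ (k + 1) hb (by omega)]
    simp only [true_or, if_true, add_zero]
    rw [if_pos (by omega), add_zero]
    simp only [show k + 2 - 2 = k by omega]
    apply Finset.sum_congr rfl
    intro d hd
    have := Finset.mem_range.1 hd
    rw [kw_small _ _ hb (by omega), if_neg (by omega)]
    push_cast
    rfl
  · rw [Finset.mul_sum]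
    simp_rw [Finset.mul_sum]
    rw [Finset.sum_comm]
    rw [Finset.sum_range_succ]
    rw [show k + 2 - 1 = k + 1 by omega]
    have hz : ∑ q ∈ Finset.range N, kw (k + 2) ((k + 2) * (q + 1) + (k + 1)) x = 0 := by
      apply Finset.sum_eq_zero
      intro q hq
      rw [kw_digit _ _ _ hb (by omega) (by omega), if_pos (by omega)]
    rw [hz, add_zero]
    apply Finset.sum_congr rfl
    intro a ha
    have ha := Finset.mem_range.1 ha
    rw [Finset.sum_range_succ']
    have h0 : kw (k + 2) 0 (((a : ℝ) + x) / ((k + 2 : ℕ) : ℝ)) = 0 := by simp [kw]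
    rw [h0, mul_zero, add_zero]
    apply Finset.sum_congr rfl
    intro q hq
    rw [kw_digit _ _ _ hb (by omega) (by omega), if_neg (by omega)]

lemma kT_arg (b a : ℕ) (hb : 2 ≤ b) (ha : a < b - 1) (x : ℝ) (hx : x ∈ Set.Icc (0 : ℝ) 1) :
    ((a : ℝ) + x) / b ∈ Set.Icc (0 : ℝ) 1 := by
  have hb0 : (0 : ℝ) < b := by positivity
  have : (a : ℝ) + 1 ≤ b := by exact_mod_cast (by omega : a + 1 ≤ b)
  have := hx.1
  have := hx.2
  constructor
  · positivity
  · rw [div_le_one hb0]; linarith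

lemma contraction (b : ℕ) (hb : 2 ≤ b) (G : ℝ → ℝ) (ε M : ℝ)
    (hM : ∀ x ∈ Set.Icc (0 : ℝ) 1, |G x| ≤ M)
    (hres : ∀ x ∈ Set.Icc (0 : ℝ) 1, |kF b x + kT b G x - G x| ≤ ε) (l : ℕ) :
    ∀ x ∈ Set.Icc (0 : ℝ) 1, |kW b l x - G x| ≤ b * ε + (1 - 1 / (b : ℝ)) ^ l * M := by
  have hb0 : (0 : ℝ) < b := by positivity
  have hε : 0 ≤ ε := le_trans (abs_nonneg _) (hres 0 ⟨le_rfl, zero_le_one⟩)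
  induction l with
  | zero =>
    intro x hx
    have : kW b 0 x = 0 := by simp [kW, kw]
    rw [this, zero_sub, abs_neg, pow_zero, one_mul]
    have := hM x hx
    have : 0 ≤ b * ε := by positivity
    linarith
  | succ l ih =>
    intro x hx
    rw [kW_rec b l hb]
    have hT : |kT b (kW b l) x - kT b G x|
        ≤ (1 - 1 / (b : ℝ)) * (b * ε + (1 - 1 / (b : ℝ)) ^ l * M) := by
      unfold kT
      rw [← mul_sub, ← Finset.sum_sub_distrib, abs_mul, abs_of_pos (by positivity)]
      have h1 := Finset.abs_sum_le_sum_abs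
        (fun a : ℕ => kW b l (((a : ℝ) + x) / b) - G (((a : ℝ) + x) / b)) (Finset.range (b - 1))
      have h2 := Finset.sum_le_card_nsmul (Finset.range (b - 1))
        (fun a : ℕ => |kW b l (((a : ℝ) + x) / b) - G (((a : ℝ) + x) / b)|) _
        (fun a ha => ih _ (kT_arg b a hb (Finset.mem_range.1 ha) x hx))
      rw [Finset.card_range, nsmul_eq_mul, Nat.cast_sub (by omega)] at h2
      calc _ ≤ (1 / (b : ℝ)) * (((b : ℝ) - (1 : ℕ)) * (b * ε + (1 - 1 / (b : ℝ)) ^ l * M)) := by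
            gcongr
            exact h1.trans h2
        _ = _ := by
            push_cast
            field_simp
    have h3 := hres x hx
    have : kF b x + kT b (kW b l) x - G x
        = (kF b x + kT b G x - G x) + (kT b (kW b l) x - kT b G x) := by ring
    rw [this]
    refine (abs_add_le _ _).trans ((add_le_add h3 hT).trans (le_of_eq ?_))
    have hbi : (b : ℝ) * (1 / (b : ℝ)) = 1 := by field_simp
    rw [pow_succ]
    linear_combination (-ε) * hbi

lemma kempner_close (b : ℕ) (hb : 2 ≤ b) (G : ℝ → ℝ) (ε M : ℝ)
    (hM : ∀ x ∈ Set.Icc (0 : ℝ) 1, |G x| ≤ M)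
    (hres : ∀ x ∈ Set.Icc (0 : ℝ) 1, |kF b x + kT b G x - G x| ≤ ε) :
    |kempnerSum b {b - 1} - G 0| ≤ b * ε := by
  have hb0 : (0 : ℝ) < b := by positivity
  have hb1 : (1 : ℝ) ≤ b := by exact_mod_cast (by omega : 1 ≤ b)
  have hr0 : 0 ≤ 1 - 1 / (b : ℝ) := by
    have : 1 / (b : ℝ) ≤ 1 := by rw [div_le_one hb0]; exact hb1
    linarith
  have hr1 : 1 - 1 / (b : ℝ) < 1 := by
    have : 0 < 1 / (b : ℝ) := by positivity
    linarith
  have hM0 : 0 ≤ M := le_trans (abs_nonneg _) (hM 0 ⟨le_rfl, zero_le_one⟩)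
  have hc := fun l => contraction b hb G ε M hM hres l 0 ⟨le_rfl, zero_le_one⟩
  have hnn : ∀ m, 0 ≤ kw b m 0 := by
    intro m; unfold kw; split_ifs
    · rw [add_zero]; positivity
    · exact le_rfl
  have hsum : Summable (fun m => kw b m 0) := by
    refine summable_of_sum_range_le (c := G 0 + (b * ε + M)) hnn ?_
    intro n
    have h1 : ∑ i ∈ Finset.range n, kw b i 0 ≤ kW b n 0 :=
      Finset.sum_le_sum_of_subset_of_nonneg
        (Finset.range_mono (Nat.lt_pow_self (by omega)).le) (fun i _ _ => hnn i)
    have h2 := (abs_le.1 (hc n)).2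
    have h3 : (1 - 1 / (b : ℝ)) ^ n * M ≤ 1 * M := by
      gcongr
      exact pow_le_one₀ hr0 hr1.le
    linarith
  have hk : kempnerSum b {b - 1} = ∑' m, kw b m 0 := by
    unfold kempnerSum kw
    simp only [add_zero]
  have ht : Filter.Tendsto (fun l => kW b l 0) Filter.atTop (nhds (kempnerSum b {b - 1})) := by
    rw [hk]
    exact hsum.hasSum.tendsto_sum_nat.comp
      (tendsto_pow_atTop_atTop_of_one_lt (by omega : 1 < b))
  have ht2 : Filter.Tendsto (fun l : ℕ => b * ε + (1 - 1 / (b : ℝ)) ^ l * M) Filter.atTop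
      (nhds (b * ε + 0 * M)) :=
    ((tendsto_pow_atTop_nhds_zero_of_lt_one hr0 hr1).mul_const M).const_add _
  rw [zero_mul, add_zero] at ht2
  exact le_of_tendsto_of_tendsto' ((ht.sub_const (G 0)).abs) ht2 hc

lemma log_taylor4 (z : ℝ) (h : |z| ≤ 1 / 2) :
    |Real.log (1 - z) + (z + z ^ 2 / 2 + z ^ 3 / 3 + z ^ 4 / 4)| ≤ 2 * |z| ^ 5 := by
  have h1 := Real.abs_log_sub_add_sum_range_le (x := z) (by linarith) 4
  norm_num [Finset.sum_range_succ] at h1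
  have h2 : |z| ^ 5 / (1 - |z|) ≤ 2 * |z| ^ 5 := by
    rw [div_le_iff₀ (by linarith)]
    have : 0 ≤ |z| ^ 5 := by positivity
    nlinarith
  rw [add_comm]
  exact h1.trans h2

lemma log_taylor3 (z : ℝ) (h : |z| ≤ 1 / 2) :
    |Real.log (1 - z) + (z + z ^ 2 / 2 + z ^ 3 / 3)| ≤ 2 * |z| ^ 4 := by
  have h1 := Real.abs_log_sub_add_sum_range_le (x := z) (by linarith) 3
  norm_num [Finset.sum_range_succ] at h1
  have h2 : |z| ^ 4 / (1 - |z|) ≤ 2 * |z| ^ 4 := by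
    rw [div_le_iff₀ (by linarith)]
    have : 0 ≤ |z| ^ 4 := by positivity
    nlinarith
  rw [add_comm]
  exact h1.trans h2

/-- Truncated asymptotic expansion of digamma. -/
noncomputable def kphi (t : ℝ) : ℝ := Real.log t - 1 / (2 * t) - 1 / (12 * t ^ 2)

lemma kphi_step (t : ℝ) (ht : 2 ≤ t) :
    |1 / t - (kphi (t + 1) - kphi t)| ≤ 40 * (1 / t ^ 4 - 1 / (t + 1) ^ 4) := by
  have ht0 : 0 < t := by linarith
  obtain ⟨z, hz⟩ : ∃ z, z = 1 / t := ⟨_, rfl⟩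
  have hz0 : 0 < z := by rw [hz]; positivity
  have hz1 : z ≤ 1 / 2 := by rw [hz]; exact one_div_le_one_div_of_le (by norm_num) ht
  have htz : t = 1 / z := by rw [hz]; field_simp
  have hlog : Real.log (t + 1) - Real.log t = Real.log (1 - (-z)) := by
    rw [← Real.log_div (by positivity) (by positivity), hz]
    congr 1
    field_simp
    ring
  have hL := log_taylor4 (-z) (by rw [abs_neg, abs_of_pos hz0]; exact hz1)
  rw [abs_neg, abs_of_pos hz0] at hL
  have key : 1 / t - (kphi (t + 1) - kphi t)
      = -(Real.log (1 - (-z)) + (-z + (-z) ^ 2 / 2 + (-z) ^ 3 / 3 + (-z) ^ 4 / 4))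
        + z ^ 5 * ((1 / 2) / (1 + z) - (4 + 3 * z) / (12 * (1 + z) ^ 2)) := by
    rw [← hlog]
    unfold kphi
    rw [htz]
    field_simp
    ring
  have h2 : |z ^ 5 * ((1 / 2) / (1 + z) - (4 + 3 * z) / (12 * (1 + z) ^ 2))| ≤ z ^ 5 := by
    rw [abs_mul, abs_of_pos (by positivity)]
    have : |(1 / 2) / (1 + z) - (4 + 3 * z) / (12 * (1 + z) ^ 2)| ≤ 1 := by
      have e : (1 / 2) / (1 + z) - (4 + 3 * z) / (12 * (1 + z) ^ 2)
          = (2 + 3 * z) / (12 * (1 + z) ^ 2) := by field_simp; ring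
      rw [e, abs_of_pos (by positivity), div_le_one (by positivity)]
      nlinarith
    calc _ ≤ z ^ 5 * 1 := by gcongr
      _ = _ := mul_one _
  have h3 : 1 / t ^ 4 - 1 / (t + 1) ^ 4 ≥ (1 / 8) * z ^ 5 := by
    have e : 1 / t ^ 4 - 1 / (t + 1) ^ 4
        = z ^ 5 * ((4 + 6 * z + 4 * z ^ 2 + z ^ 3) / (1 + z) ^ 4) := by
      rw [htz]; field_simp; ring
    rw [e]
    have : (1 / 8 : ℝ) ≤ (4 + 6 * z + 4 * z ^ 2 + z ^ 3) / (1 + z) ^ 4 := by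
      rw [le_div_iff₀ (by positivity)]
      have : (1 + z) ^ 4 ≤ (1 + 1 / 2) ^ 4 := by gcongr
      nlinarith [pow_pos hz0 2, pow_pos hz0 3]
    nlinarith [pow_pos hz0 5]
  rw [key]
  refine (abs_add_le _ _).trans ?_
  rw [abs_neg]
  have := pow_pos hz0 5
  linarith

lemma harm_sum (t : ℝ) (ht : 2 ≤ t) (N : ℕ) :
    |∑ n ∈ Finset.range N, 1 / (t + n) - (kphi (t + N) - kphi t)|
      ≤ 40 * (1 / t ^ 4 - 1 / (t + N) ^ 4) := by
  induction N with
  | zero => simp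
  | succ N ih =>
    rw [Finset.sum_range_succ]
    have hN : (0 : ℝ) ≤ N := by positivity
    have h := kphi_step (t + N) (by linarith)
    push_cast
    rw [← add_assoc]
    have e : ∑ n ∈ Finset.range N, 1 / (t + (n : ℝ)) + 1 / (t + N) - (kphi (t + N + 1) - kphi t)
      = (∑ n ∈ Finset.range N, 1 / (t + (n : ℝ)) - (kphi (t + N) - kphi t))
        + (1 / (t + N) - (kphi (t + N + 1) - kphi (t + N))) := by ring
    rw [e]
    refine (abs_add_le _ _).trans ?_
    linarith

/-- Polynomial main term of the harmonic block. -/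
noncomputable def kq (β s : ℝ) : ℝ :=
  (-(β - β ^ 2 * s) - (β - β ^ 2 * s) ^ 2 / 2 - (β - β ^ 2 * s) ^ 3 / 3)
    - (β * s - (β * s) ^ 2 / 2 + (β * s) ^ 3 / 3) - (β ^ 2 + β ^ 3) / 2
    + (β - β ^ 2 * s + β ^ 3 * s ^ 2) / 2 + (β ^ 2 - 2 * β ^ 3 * s) / 12

set_option maxHeartbeats 1000000 in
lemma kphi_diff (b s β : ℝ) (hb : 2 ≤ b) (hβ : β = 1 / b) (hs0 : 0 ≤ s) (hs1 : s ≤ 1) :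
    |kphi (b ^ 2 - b + s) - kphi (b + s) - (Real.log b + kq β s)| ≤ 20 * β ^ 4 := by
  have hb0 : 0 < b := by linarith
  have hβ0 : 0 < β := by rw [hβ]; positivity
  have hβ1 : β ≤ 1 / 2 := by rw [hβ]; exact one_div_le_one_div_of_le (by norm_num) hb
  have hbβ : b = 1 / β := by rw [hβ]; field_simp
  have hβ4 := pow_pos hβ0 4
  have hs : 0 ≤ β * s := by positivity
  have hs' : β * s ≤ β := by nlinarith
  set ε := β - β ^ 2 * s with hε
  have hε0 : 0 ≤ ε := by rw [hε]; nlinarith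
  have hε1 : ε ≤ β := by rw [hε]; nlinarith [sq_nonneg β]
  have l1 : Real.log (b ^ 2 - b + s) = 2 * Real.log b + Real.log (1 - ε) := by
    have : b ^ 2 - b + s = b ^ 2 * (1 - ε) := by rw [hε, hβ]; field_simp; ring
    rw [this, Real.log_mul (by positivity) (by linarith), Real.log_pow]
    norm_num
  have l2 : Real.log (b + s) = Real.log b + Real.log (1 - (-(β * s))) := by
    have : b + s = b * (1 - (-(β * s))) := by rw [hβ]; field_simp; ring
    rw [this, Real.log_mul (by positivity) (by linarith)]
  have t1 := log_taylor3 ε (by rw [abs_of_nonneg hε0]; linarith)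
  have t2 := log_taylor3 (-(β * s)) (by rw [abs_neg, abs_of_nonneg hs]; linarith)
  rw [abs_of_nonneg hε0] at t1
  rw [abs_neg, abs_of_nonneg hs] at t2
  have p1 : ε ^ 4 ≤ β ^ 4 := by gcongr
  have p2 : (β * s) ^ 4 ≤ β ^ 4 := by gcongr
  have r1 : |1 / (b + s) - (β - β ^ 2 * s + β ^ 3 * s ^ 2)| ≤ β ^ 4 := by
    have e : 1 / (b + s) - (β - β ^ 2 * s + β ^ 3 * s ^ 2) = -(β ^ 4 * (s ^ 3 / (1 + β * s))) := by
      rw [hbβ]; field_simp; ring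
    rw [e, abs_neg, abs_of_nonneg (by positivity)]
    have : s ^ 3 / (1 + β * s) ≤ 1 := by
      rw [div_le_one (by positivity)]
      have : s ^ 3 ≤ 1 := pow_le_one₀ hs0 hs1
      linarith
    nlinarith
  have r2 : |1 / (b + s) ^ 2 - (β ^ 2 - 2 * β ^ 3 * s)| ≤ 5 * β ^ 4 := by
    have e : 1 / (b + s) ^ 2 - (β ^ 2 - 2 * β ^ 3 * s)
        = β ^ 4 * (s ^ 2 * (3 + 2 * (β * s)) / (1 + β * s) ^ 2) := by
      rw [hbβ]; field_simp; ring
    rw [e, abs_of_nonneg (by positivity)]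
    have : s ^ 2 * (3 + 2 * (β * s)) / (1 + β * s) ^ 2 ≤ 5 := by
      rw [div_le_iff₀ (by positivity)]
      have : s ^ 2 ≤ 1 := pow_le_one₀ hs0 hs1
      nlinarith
    nlinarith
  have hinv : 1 / (1 - ε) ≤ 2 := by
    rw [div_le_iff₀ (by linarith)]; linarith
  have hinv0 : 0 < 1 / (1 - ε) := by
    have : 0 < 1 - ε := by linarith
    positivity
  have e1 : 1 / (b ^ 2 - b + s) = β ^ 2 * (1 / (1 - ε)) := by
    have h1 : 1 - ε ≠ 0 := by linarith
    have : b ^ 2 - b + s = (1 - ε) / β ^ 2 := by rw [hε, hbβ]; field_simp; ring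
    rw [this]; field_simp
  have r3 : |1 / (b ^ 2 - b + s) - (β ^ 2 + β ^ 3)| ≤ 2 * β ^ 4 := by
    have h1 : 1 - ε ≠ 0 := by linarith
    have e : 1 / (b ^ 2 - b + s) - (β ^ 2 + β ^ 3) = β ^ 4 * ((1 - s * (1 + β)) * (1 / (1 - ε))) := by
      rw [e1]; field_simp; rw [hε]; ring
    have h2 : |1 - s * (1 + β)| ≤ 1 := by
      rw [abs_le]; constructor <;> nlinarith
    rw [e, abs_mul, abs_mul, abs_of_pos hβ4, abs_of_pos hinv0]
    have : |1 - s * (1 + β)| * (1 / (1 - ε)) ≤ 1 * 2 := by gcongr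
    nlinarith
  have r4 : |1 / (b ^ 2 - b + s) ^ 2| ≤ 4 * β ^ 4 := by
    have e : 1 / (b ^ 2 - b + s) ^ 2 = β ^ 4 * (1 / (1 - ε)) ^ 2 := by
      rw [← one_div_pow, e1]; ring
    rw [e, abs_of_nonneg (by positivity)]
    have : (1 / (1 - ε)) ^ 2 ≤ 2 ^ 2 := by gcongr
    nlinarith
  have hk : kphi (b ^ 2 - b + s) - kphi (b + s) - (Real.log b + kq β s)
      = (Real.log (1 - ε) + (ε + ε ^ 2 / 2 + ε ^ 3 / 3))
        - (Real.log (1 - (-(β * s))) + (-(β * s) + (-(β * s)) ^ 2 / 2 + (-(β * s)) ^ 3 / 3))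
        - (1 / (b ^ 2 - b + s) - (β ^ 2 + β ^ 3)) / 2 - (1 / (b ^ 2 - b + s) ^ 2) / 12
        + (1 / (b + s) - (β - β ^ 2 * s + β ^ 3 * s ^ 2)) / 2
        + (1 / (b + s) ^ 2 - (β ^ 2 - 2 * β ^ 3 * s)) / 12 := by
    unfold kphi kq
    rw [l1, l2, ← hε]
    simp only [one_div, mul_inv]
    ring
  rw [hk]
  rw [abs_le] at *
  constructor <;> linarith [t1.1, t1.2, t2.1, t2.2, r1.1, r1.2, r2.1, r2.2, r3.1, r3.2, r4.1, r4.2]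

/-- Truncated zeta sums starting at 2. -/
noncomputable def kz (j b : ℕ) : ℝ := ∑ d ∈ Finset.range (b - 2), 1 / ((d : ℝ) + 2) ^ j

lemma kz_nonneg (j b : ℕ) : 0 ≤ kz j b := by
  unfold kz; positivity

lemma kz2_le (b : ℕ) : kz 2 b ≤ 1 := by
  have h : ∀ n : ℕ, ∑ d ∈ Finset.range n, 1 / ((d : ℝ) + 2) ^ 2 ≤ 1 - 1 / ((n : ℝ) + 1) := by
    intro n
    induction n with
    | zero => simp
    | succ n ih =>
      rw [Finset.sum_range_succ]
      have : 1 / ((n : ℝ) + 2) ^ 2 ≤ 1 / ((n : ℝ) + 1) - 1 / ((n : ℝ) + 1 + 1) := by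
        have e : 1 / ((n : ℝ) + 1) - 1 / ((n : ℝ) + 1 + 1) = 1 / (((n : ℝ) + 1) * (n + 2)) := by
          field_simp; ring
        rw [e]
        apply one_div_le_one_div_of_le (by positivity)
        have : (0 : ℝ) ≤ n := by positivity
        nlinarith
      push_cast
      linarith
  have h1 := h (b - 2)
  have : 0 ≤ 1 / (((b - 2 : ℕ) : ℝ) + 1) := by positivity
  unfold kz
  linarith

lemma kz3_le (b : ℕ) : kz 3 b ≤ 1 := by
  refine le_trans ?_ (kz2_le b)
  unfold kz
  apply Finset.sum_le_sum
  intro d hd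
  apply one_div_le_one_div_of_le (by positivity)
  have : (0 : ℝ) ≤ d := by positivity
  exact pow_le_pow_right₀ (by linarith) (by norm_num)

lemma zeta_tendsto (s : ℕ) (hs : 2 ≤ s) :
    Filter.Tendsto (fun N => ∑ k ∈ Finset.range N, (((k : ℝ) + 1) ^ s)⁻¹) Filter.atTop
      (nhds (zetaVal s)) := by
  have h1 : Summable (fun n : ℕ => ((n : ℝ) ^ s)⁻¹) := Real.summable_nat_pow_inv.2 (by omega)
  have h2 := (summable_nat_add_iff 1).2 h1
  have h3 : Summable (fun k : ℕ => (((k : ℝ) + 1) ^ s)⁻¹) := by simpa using h2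
  exact h3.hasSum.tendsto_sum_nat

lemma inv_shift_tendsto : Filter.Tendsto (fun N : ℕ => 1 / ((N : ℝ) + 1)) Filter.atTop (nhds 0) :=
  tendsto_one_div_add_atTop_nhds_zero_nat

/-- Upper tail bound. -/
lemma zeta_upper (s : ℕ) (hs : 2 ≤ s) (N : ℕ) :
    zetaVal s ≤ ∑ k ∈ Finset.range (N + 1), (((k : ℝ) + 1) ^ s)⁻¹ + 1 / ((N : ℝ) + 1) := by
  have hanti : Antitone (fun N : ℕ =>
      ∑ k ∈ Finset.range (N + 1), (((k : ℝ) + 1) ^ s)⁻¹ + 1 / ((N : ℝ) + 1)) := by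
    apply antitone_nat_of_succ_le
    intro n
    rw [Finset.sum_range_succ _ (n + 1)]
    have hn : (0 : ℝ) ≤ n := by positivity
    have h1 : ((((n + 1 : ℕ) : ℝ) + 1) ^ s)⁻¹ ≤ 1 / ((n : ℝ) + 1) - 1 / ((n : ℝ) + 1 + 1) := by
      have e : 1 / ((n : ℝ) + 1) - 1 / ((n : ℝ) + 1 + 1) = 1 / (((n : ℝ) + 1) * (n + 2)) := by
        field_simp; ring
      rw [e, ← one_div]
      apply one_div_le_one_div_of_le (by positivity)
      have : (((n + 1 : ℕ) : ℝ) + 1) ^ 2 ≤ (((n + 1 : ℕ) : ℝ) + 1) ^ s :=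
        pow_le_pow_right₀ (by push_cast; linarith) hs
      push_cast at this ⊢
      nlinarith
    push_cast at h1 ⊢
    linarith
  have ht := ((zeta_tendsto s hs).comp (Filter.tendsto_add_atTop_nat 1)).add inv_shift_tendsto
  rw [add_zero] at ht
  exact hanti.le_of_tendsto ht N

lemma zeta_lower (s : ℕ) (hs : 2 ≤ s) (N : ℕ) :
    ∑ k ∈ Finset.range N, (((k : ℝ) + 1) ^ s)⁻¹ ≤ zetaVal s := by
  refine Monotone.ge_of_tendsto ?_ (zeta_tendsto s hs) N
  apply monotone_nat_of_le_succ
  intro n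
  rw [Finset.sum_range_succ]
  have : (0 : ℝ) ≤ (((n : ℝ) + 1) ^ s)⁻¹ := by positivity
  linarith

lemma zeta2_lower (N : ℕ) :
    ∑ k ∈ Finset.range N, (((k : ℝ) + 1) ^ 2)⁻¹ + 1 / ((N : ℝ) + 1) ≤ zetaVal 2 := by
  have hmono : Monotone (fun N : ℕ =>
      ∑ k ∈ Finset.range N, (((k : ℝ) + 1) ^ 2)⁻¹ + 1 / ((N : ℝ) + 1)) := by
    apply monotone_nat_of_le_succ
    intro n
    rw [Finset.sum_range_succ]
    have h1 : 1 / ((n : ℝ) + 1) - 1 / ((n : ℝ) + 1 + 1) ≤ (((n : ℝ) + 1) ^ 2)⁻¹ := by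
      have e : 1 / ((n : ℝ) + 1) - 1 / ((n : ℝ) + 1 + 1) = 1 / (((n : ℝ) + 1) * (n + 2)) := by
        field_simp; ring
      rw [e, ← one_div]
      apply one_div_le_one_div_of_le (by positivity)
      have hn : (0 : ℝ) ≤ n := by positivity
      nlinarith
    push_cast
    linarith
  have ht := (zeta_tendsto 2 le_rfl).add inv_shift_tendsto
  rw [add_zero] at ht
  exact hmono.ge_of_tendsto ht N

lemma sum_kz (s b : ℕ) (hb : 2 ≤ b) :
    ∑ k ∈ Finset.range (b - 2 + 1), (((k : ℝ) + 1) ^ s)⁻¹ = 1 + kz s b := by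
  rw [Finset.sum_range_succ', add_comm]
  unfold kz
  congr 1
  · simp
  · apply Finset.sum_congr rfl
    intro k hk
    rw [one_div]
    push_cast
    congr 2
    ring

lemma kz2_zeta (b : ℕ) (hb : 2 ≤ b) :
    |zetaVal 2 - 1 - kz 2 b - 1 / b| ≤ 2 * (1 / (b : ℝ)) ^ 2 := by
  obtain ⟨k, rfl⟩ : ∃ k, b = k + 2 := ⟨b - 2, by omega⟩
  have h1 := zeta_upper 2 le_rfl (k + 2 - 2)
  have h2 := zeta2_lower (k + 2 - 2 + 1)
  rw [sum_kz 2 _ hb] at h1 h2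
  rw [show k + 2 - 2 = k by omega] at h1 h2
  push_cast at h1 h2 ⊢
  rw [show (k : ℝ) + 1 + 1 = k + 2 by ring] at h2
  have h3 : 1 / ((k : ℝ) + 1) - 1 / (k + 2) ≤ 2 * (1 / ((k : ℝ) + 2)) ^ 2 := by
    have e : 1 / ((k : ℝ) + 1) - 1 / (k + 2) = 1 / (((k : ℝ) + 1) * (k + 2)) := by
      field_simp; ring
    rw [e, one_div_pow, mul_one_div, div_le_div_iff₀ (by positivity) (by positivity)]
    have hn : (0 : ℝ) ≤ k := by positivity
    nlinarith
  have : 0 ≤ 2 * (1 / ((k : ℝ) + 2)) ^ 2 := by positivity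
  rw [abs_le]
  constructor <;> linarith

lemma kz3_zeta (b : ℕ) (hb : 2 ≤ b) :
    |zetaVal 3 - 1 - kz 3 b| ≤ 2 * (1 / (b : ℝ)) := by
  obtain ⟨k, rfl⟩ : ∃ k, b = k + 2 := ⟨b - 2, by omega⟩
  have h1 := zeta_upper 3 (by norm_num) (k + 2 - 2)
  have h2 := zeta_lower 3 (by norm_num) (k + 2 - 2 + 1)
  rw [sum_kz 3 _ hb] at h1 h2
  rw [show k + 2 - 2 = k by omega] at h1
  push_cast at h1 h2 ⊢
  have h3 : 1 / ((k : ℝ) + 1) ≤ 2 * (1 / ((k : ℝ) + 2)) := by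
    rw [mul_one_div, div_le_div_iff₀ (by positivity) (by positivity)]
    have hn : (0 : ℝ) ≤ k := by positivity
    nlinarith
  have : 0 ≤ 2 * (1 / ((k : ℝ) + 2)) := by positivity
  rw [abs_le]
  constructor <;> linarith

lemma kT_kF (b : ℕ) (hb : 2 ≤ b) (x : ℝ) :
    kT b (kF b) x = ∑ n ∈ Finset.range (b * (b - 2)), 1 / (((b : ℝ) + x) + n)
      - (1 / (b : ℝ)) * ∑ d ∈ Finset.range (b - 2), 1 / (((d : ℝ) + 2) - (1 - x) * (1 / b)) := by
  have hb0 : (b : ℝ) ≠ 0 := by positivity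
  rw [sum_range_block, Finset.mul_sum, ← Finset.sum_sub_distrib]
  unfold kT kF
  simp_rw [Finset.mul_sum]
  rw [Finset.sum_comm]
  apply Finset.sum_congr rfl
  intro d hd
  obtain ⟨k, rfl⟩ : ∃ k, b = k + 2 := ⟨b - 2, by omega⟩
  rw [show k + 2 - 1 = k + 1 by omega, Finset.sum_range_succ _ (k + 1)]
  have e1 : 1 / (((k + 2 : ℕ) : ℝ) + x + (((k + 2) * d + (k + 1) : ℕ) : ℝ))
      = 1 / ((k + 2 : ℕ) : ℝ) * (1 / ((d : ℝ) + 2 - (1 - x) * (1 / ((k + 2 : ℕ) : ℝ)))) := by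
    rw [one_div_mul_one_div]
    congr 1
    push_cast at hb0 ⊢
    field_simp
    ring
  rw [e1, add_sub_cancel_right]
  apply Finset.sum_congr rfl
  intro a ha
  rw [← one_div, one_div_mul_one_div]
  congr 1
  push_cast at hb0 ⊢
  field_simp
  ring

lemma second_part (b : ℕ) (hb : 2 ≤ b) (y β : ℝ) (hβ : β = 1 / b) (hy0 : 0 ≤ y) (hy1 : y ≤ 1) :
    |β * ∑ d ∈ Finset.range (b - 2), 1 / (((d : ℝ) + 2) - y * β)
      - (β * kz 1 b + β ^ 2 * y * kz 2 b + β ^ 3 * y ^ 2 * kz 3 b)| ≤ β ^ 4 := by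
  have hb0 : (0 : ℝ) < b := by positivity
  have hb2 : (2 : ℝ) ≤ b := by exact_mod_cast hb
  have hβ0 : 0 < β := by rw [hβ]; positivity
  have hβ1 : β ≤ 1 / 2 := by rw [hβ]; exact one_div_le_one_div_of_le (by norm_num) hb2
  have hη0 : 0 ≤ y * β := by positivity
  have hη1 : y * β ≤ β := by nlinarith
  have e : β * ∑ d ∈ Finset.range (b - 2), 1 / (((d : ℝ) + 2) - y * β)
      - (β * kz 1 b + β ^ 2 * y * kz 2 b + β ^ 3 * y ^ 2 * kz 3 b)
      = β * ∑ d ∈ Finset.range (b - 2), (1 / (((d : ℝ) + 2) - y * β) - (1 / ((d : ℝ) + 2) ^ 1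
        + (y * β) * (1 / ((d : ℝ) + 2) ^ 2) + (y * β) ^ 2 * (1 / ((d : ℝ) + 2) ^ 3))) := by
    rw [Finset.sum_sub_distrib, Finset.sum_add_distrib, Finset.sum_add_distrib,
      ← Finset.mul_sum, ← Finset.mul_sum]
    unfold kz
    ring
  rw [e, abs_mul, abs_of_pos hβ0]
  have h1 : |∑ d ∈ Finset.range (b - 2), (1 / (((d : ℝ) + 2) - y * β) - (1 / ((d : ℝ) + 2) ^ 1
        + (y * β) * (1 / ((d : ℝ) + 2) ^ 2) + (y * β) ^ 2 * (1 / ((d : ℝ) + 2) ^ 3)))|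
      ≤ β ^ 3 * kz 2 b := by
    refine (Finset.abs_sum_le_sum_abs _ _).trans ?_
    unfold kz
    rw [Finset.mul_sum]
    apply Finset.sum_le_sum
    intro d hd
    have hd0 : (0 : ℝ) ≤ d := by positivity
    generalize y * β = η at *
    obtain ⟨m, hm⟩ : ∃ m : ℝ, m = (d : ℝ) + 2 := ⟨_, rfl⟩
    rw [← hm]
    have hm2 : 2 ≤ m := by rw [hm]; linarith
    have hm0 : 0 < m := by linarith
    have hme : 0 < m - η := by linarith
    have e2 : 1 / (m - η) - (1 / m ^ 1 + η * (1 / m ^ 2) + η ^ 2 * (1 / m ^ 3))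
        = η ^ 3 * (1 / (m ^ 3 * (m - η))) := by
      field_simp; ring
    rw [e2, abs_of_nonneg (by positivity)]
    have h3 : η ^ 3 ≤ β ^ 3 := by gcongr
    have h4 : 1 / (m ^ 3 * (m - η)) ≤ 1 / m ^ 2 := by
      apply one_div_le_one_div_of_le (by positivity)
      have : 1 ≤ m * (m - η) := by nlinarith
      nlinarith [pow_pos hm0 2]
    gcongr
  have h2 : β ^ 3 * kz 2 b ≤ β ^ 3 * 1 := by
    gcongr
    exact kz2_le b
  nlinarith

lemma kT_poly (b : ℕ) (hb : 2 ≤ b) (A B C D x β : ℝ) (hβ : β = 1 / b) :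
    kT b (fun x => A + B * (1 - x) + C * (1 - x) ^ 2 + D * (1 - x) ^ 3) x
      = A * (1 - β) + B * ((1 - β) / 2 + (β - β ^ 2) * (1 - x))
        + C * ((1 - β) * (2 - β) / 6 + (1 - x) * β * (1 - β) + (1 - x) ^ 2 * β ^ 2 * (1 - β))
        + D * ((1 - β) ^ 2 / 4 + (1 - x) * β * (1 - β) * (2 - β) / 2
          + 3 / 2 * (1 - x) ^ 2 * β ^ 2 * (1 - β) + (1 - x) ^ 3 * β ^ 3 * (1 - β)) := by
  have hb0 : (b : ℝ) ≠ 0 := by positivity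
  have h : ∀ n : ℕ, ∀ r : ℝ, ∑ a ∈ Finset.range n, (A + B * (r - a * β) + C * (r - a * β) ^ 2
      + D * (r - a * β) ^ 3) = A * n + B * (r * n - β * (n * (n - 1) / 2))
      + C * (r ^ 2 * n - 2 * r * β * (n * (n - 1) / 2) + β ^ 2 * (n * (n - 1) * (2 * n - 1) / 6))
      + D * (r ^ 3 * n - 3 * r ^ 2 * β * (n * (n - 1) / 2)
        + 3 * r * β ^ 2 * (n * (n - 1) * (2 * n - 1) / 6) - β ^ 3 * (n * (n - 1) / 2) ^ 2) := by
    intro n r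
    induction n with
    | zero => simp
    | succ n ih =>
      rw [Finset.sum_range_succ, ih]
      push_cast
      ring
  unfold kT
  have h2 := h (b - 1) (1 - x * β)
  have h3 : ∀ a : ℕ, 1 - ((a : ℝ) + x) / b = 1 - x * β - a * β := by
    intro a; rw [hβ]; ring
  simp only [h3]
  rw [h2, Nat.cast_sub (by omega), hβ]
  push_cast
  field_simp
  ring

lemma kT_add (b : ℕ) (f g : ℝ → ℝ) (x : ℝ) :
    kT b (fun x => f x + g x) x = kT b f x + kT b g x := by
  unfold kT
  rw [Finset.sum_add_distrib, mul_add]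

lemma bound4 (f : ℝ × ℝ × ℝ × ℝ → ℝ) (hf : Continuous f) :
    ∃ K : ℝ, 0 ≤ K ∧ ∀ a b c d : ℝ, a ∈ Set.Icc (0 : ℝ) 1 → b ∈ Set.Icc (0 : ℝ) 1 →
      c ∈ Set.Icc (0 : ℝ) 1 → d ∈ Set.Icc (0 : ℝ) 1 → |f (a, b, c, d)| ≤ K := by
  obtain ⟨K, hK⟩ := (isCompact_Icc (a := (0 : ℝ × ℝ × ℝ × ℝ)) (b := 1)).exists_bound_of_continuousOn
    hf.continuousOn
  have h : ∀ a b c d : ℝ, a ∈ Set.Icc (0 : ℝ) 1 → b ∈ Set.Icc (0 : ℝ) 1 →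
      c ∈ Set.Icc (0 : ℝ) 1 → d ∈ Set.Icc (0 : ℝ) 1 → |f (a, b, c, d)| ≤ K := by
    intro a b c d ha hb hc hd
    exact hK (a, b, c, d) ⟨⟨ha.1, hb.1, hc.1, hd.1⟩, ⟨ha.2, hb.2, hc.2, hd.2⟩⟩
  have z : (0 : ℝ) ∈ Set.Icc (0 : ℝ) 1 := ⟨le_rfl, zero_le_one⟩
  exact ⟨K, (abs_nonneg _).trans (h 0 0 0 0 z z z z), h⟩

lemma kF_zero (b : ℕ) (hb : 2 ≤ b) : kF b 0 = 1 + kz 1 b - 1 / ((b : ℝ) - 1) := by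
  have h := sum_kz 1 b hb
  rw [Finset.sum_range_succ] at h
  rw [← h, Nat.cast_sub hb]
  unfold kF
  simp only [add_zero, pow_one, one_div]
  rw [show (b : ℝ) - (2 : ℕ) + 1 = b - 1 by push_cast; ring]
  ring

/-- Remainder polynomial. -/
noncomputable def kR (p : ℝ × ℝ × ℝ × ℝ) : ℝ :=
  1 / 2 - 2 * p.2.1 - p.2.1 * p.2.2.2 - p.1 + 23 / 6 * p.1 * p.2.1 + p.1 * p.2.1 * p.2.2.2
    + p.1 * p.2.1 * p.2.2.1 - 3 / 2 * p.1 * p.2.1 ^ 2 - p.1 * p.2.1 ^ 2 * p.2.2.2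
    + 1 / 3 * p.1 ^ 2 - 5 / 6 * p.1 ^ 2 * p.2.1 + p.1 ^ 2 * p.2.1 ^ 2
    + p.1 ^ 2 * p.2.1 ^ 2 * p.2.2.2 - 1 / 3 * p.1 ^ 3 * p.2.1 ^ 3

lemma kR_cont : Continuous kR := by
  unfold kR; fun_prop

lemma first_part (b : ℕ) (hb : 2 ≤ b) (x β : ℝ) (hβ : β = 1 / b) (hx0 : 0 ≤ x) (hx1 : x ≤ 1) :
    |∑ n ∈ Finset.range (b * (b - 2)), 1 / (((b : ℝ) + x) + n) - (Real.log b + kq β x)|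
      ≤ 60 * β ^ 4 := by
  have hb2 : (2 : ℝ) ≤ b := by exact_mod_cast hb
  have hb0 : (0 : ℝ) < b := by linarith
  have h1 := harm_sum ((b : ℝ) + x) (by linarith) (b * (b - 2))
  have e : (b : ℝ) + x + ((b * (b - 2) : ℕ) : ℝ) = (b : ℝ) ^ 2 - b + x := by
    rw [Nat.cast_mul, Nat.cast_sub hb]; push_cast; ring
  rw [e] at h1
  have h2 := kphi_diff b x β hb2 hβ hx0 hx1
  have h3 : 1 / ((b : ℝ) + x) ^ 4 ≤ β ^ 4 := by
    rw [hβ, one_div_pow]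
    apply one_div_le_one_div_of_le (by positivity)
    gcongr
    linarith
  have h4 : 0 ≤ 1 / ((b : ℝ) ^ 2 - b + x) ^ 4 := by positivity
  rw [abs_le] at *
  constructor <;> linarith [h1.1, h1.2, h2.1, h2.2]

set_option maxHeartbeats 2000000 in
theorem kempner_top_digit_asymptotic :
    ∃ C > (0 : ℝ), ∃ B : ℕ, ∀ b : ℕ, B ≤ b →
      |kempnerSum b {b - 1} - (b : ℝ) * Real.log b + zetaVal 2 / (2 * b)
        + (3 * zetaVal 2 + zetaVal 3) / (3 * (b : ℝ) ^ 2)| ≤ C / (b : ℝ) ^ 3 := by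
  obtain ⟨K, hK0, hK⟩ := bound4 kR kR_cont
  refine ⟨K + 61 + 10, by linarith, 2, ?_⟩
  intro b hb
  have hb2 : (2 : ℝ) ≤ b := by exact_mod_cast hb
  have hb0 : (0 : ℝ) < b := by linarith
  obtain ⟨β, hβ⟩ : ∃ β : ℝ, β = 1 / b := ⟨_, rfl⟩
  have hβ0 : 0 < β := by rw [hβ]; positivity
  have hβ1 : β ≤ 1 / 2 := by rw [hβ]; exact one_div_le_one_div_of_le (by norm_num) hb2
  have hbβ : (b : ℝ) * β = 1 := by rw [hβ]; field_simp
  have hu0 := kz_nonneg 2 b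
  have hu1 := kz2_le b
  have hv0 := kz_nonneg 3 b
  have hv1 := kz3_le b
  have hE2 := kz2_zeta b hb
  have hE3 := kz3_zeta b hb
  have hF0 := kF_zero b hb
  rw [← hβ] at hE2 hE3
  obtain ⟨u, hu⟩ : ∃ u, u = kz 2 b := ⟨_, rfl⟩
  obtain ⟨v, hv⟩ : ∃ v, v = kz 3 b := ⟨_, rfl⟩
  obtain ⟨h, hh⟩ : ∃ h, h = kz 1 b := ⟨_, rfl⟩
  obtain ⟨L, hL⟩ : ∃ L, L = Real.log b := ⟨_, rfl⟩
  obtain ⟨D, hD⟩ : ∃ D : ℝ, D = 1 / 3 * β ^ 3 := ⟨_, rfl⟩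
  obtain ⟨C, hC⟩ : ∃ C : ℝ, C = 1 / 2 * β ^ 2 - 1 / 2 * β ^ 3 - β ^ 3 * v := ⟨_, rfl⟩
  obtain ⟨B, hB⟩ : ∃ B : ℝ, B = β - 1 / 2 * β ^ 2 - β ^ 2 * u - 11 / 6 * β ^ 3 - β ^ 3 * u :=
    ⟨_, rfl⟩
  obtain ⟨A, hA⟩ : ∃ A : ℝ, A = b * L - h - 1 - 1 / 2 * β - 1 / 2 * β * u - 5 / 6 * β ^ 2
      - 1 / 3 * β ^ 2 * v + 13 / 12 * β ^ 3 + 1 / 2 * β ^ 3 * v + 1 / 2 * β ^ 3 * u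
      - 1 / 6 * β ^ 4 * v := ⟨_, rfl⟩
  rw [← hu] at hu0 hu1 hE2
  rw [← hv] at hv0 hv1 hE3
  rw [← hh] at hF0
  rw [← hL]
  have hres : ∀ x ∈ Set.Icc (0 : ℝ) 1, |kF b x + kT b (fun x => kF b x
      + (A + B * (1 - x) + C * (1 - x) ^ 2 + D * (1 - x) ^ 3)) x
      - (kF b x + (A + B * (1 - x) + C * (1 - x) ^ 2 + D * (1 - x) ^ 3))| ≤ (K + 61) * β ^ 4 := by
    intro x hx
    rw [kT_add, kT_kF b hb, kT_poly b hb A B C D x β hβ, ← hβ]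
    have h1 := first_part b hb x β hβ hx.1 hx.2
    have h2 := second_part b hb (1 - x) β hβ (by linarith [hx.2]) (by linarith [hx.1])
    rw [← hL] at h1
    rw [← hu, ← hv, ← hh] at h2
    have h3 := hK β (1 - x) u v ⟨hβ0.le, by linarith⟩ ⟨by linarith [hx.2], by linarith [hx.1]⟩
      ⟨hu0, hu1⟩ ⟨hv0, hv1⟩
    have h4 : |β ^ 4 * kR (β, 1 - x, u, v)| ≤ β ^ 4 * K := by
      rw [abs_mul, abs_of_pos (by positivity)]
      gcongr
    obtain ⟨S1, hS1⟩ : ∃ S1, S1 = ∑ n ∈ Finset.range (b * (b - 2)), 1 / (((b : ℝ) + x) + n) :=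
      ⟨_, rfl⟩
    obtain ⟨S2, hS2⟩ : ∃ S2, S2 = ∑ d ∈ Finset.range (b - 2), 1 / (((d : ℝ) + 2) - (1 - x) * β) :=
      ⟨_, rfl⟩
    rw [← hS1] at h1 ⊢
    rw [← hS2] at h2 ⊢
    have key : kF b x + (S1 - β * S2 + (A * (1 - β) + B * ((1 - β) / 2 + (β - β ^ 2) * (1 - x))
        + C * ((1 - β) * (2 - β) / 6 + (1 - x) * β * (1 - β) + (1 - x) ^ 2 * β ^ 2 * (1 - β))
        + D * ((1 - β) ^ 2 / 4 + (1 - x) * β * (1 - β) * (2 - β) / 2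
          + 3 / 2 * (1 - x) ^ 2 * β ^ 2 * (1 - β) + (1 - x) ^ 3 * β ^ 3 * (1 - β))))
        - (kF b x + (A + B * (1 - x) + C * (1 - x) ^ 2 + D * (1 - x) ^ 3))
        = (S1 - (L + kq β x))
          - (β * S2 - (β * h + β ^ 2 * (1 - x) * u + β ^ 3 * (1 - x) ^ 2 * v))
          + β ^ 4 * kR (β, 1 - x, u, v) := by
      unfold kq kR
      rw [hA, hB, hC, hD]
      linear_combination (-L) * hbβ
    rw [key]
    rw [abs_le] at *
    constructor <;> linarith [h1.1, h1.2, h2.1, h2.2, h4.1, h4.2]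
  have hcont : ContinuousOn (fun x => kF b x
      + (A + B * (1 - x) + C * (1 - x) ^ 2 + D * (1 - x) ^ 3)) (Set.Icc (0 : ℝ) 1) := by
    apply ContinuousOn.add
    · unfold kF
      apply continuousOn_finsetSum
      intro d hd
      apply ContinuousOn.inv₀ (by fun_prop)
      intro x hx
      have := hx.1
      positivity
    · fun_prop
  obtain ⟨M, hM⟩ := isCompact_Icc.exists_bound_of_continuousOn hcont
  have hmain := kempner_close b hb _ _ M hM hres
  have e1 : (b : ℝ) * ((K + 61) * β ^ 4) = (K + 61) * β ^ 3 := by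
    linear_combination ((K + 61) * β ^ 3) * hbβ
  rw [e1] at hmain
  simp only [sub_zero, one_pow, mul_one] at hmain
  rw [hF0] at hmain
  have hr : |1 / ((b : ℝ) - 1) - β - β ^ 2| ≤ 2 * β ^ 3 := by
    have h1 : (0 : ℝ) < b - 1 := by linarith
    have e : 1 / ((b : ℝ) - 1) - β - β ^ 2 = β ^ 3 * (1 / (1 - β)) := by
      have h2 : 1 - β ≠ 0 := by linarith
      have h3 : (b : ℝ) - 1 = (1 - β) / β := by
        field_simp
        linarith
      rw [h3]
      field_simp
      ring
    have h2 : 0 < 1 - β := by linarith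
    rw [e, abs_of_pos (by positivity)]
    have : 1 / (1 - β) ≤ 2 := by rw [div_le_iff₀ h2]; linarith
    nlinarith [pow_pos hβ0 3]
  have t1 : zetaVal 2 / (2 * b) = zetaVal 2 * β / 2 := by rw [hβ]; field_simp
  have t2 : (3 * zetaVal 2 + zetaVal 3) / (3 * (b : ℝ) ^ 2)
      = (3 * zetaVal 2 + zetaVal 3) * β ^ 2 / 3 := by rw [hβ]; field_simp
  have t3 : (K + 61 + 10) / (b : ℝ) ^ 3 = (K + 61 + 10) * β ^ 3 := by rw [hβ]; field_simp
  rw [t1, t2, t3]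
  obtain ⟨r, hrr⟩ : ∃ r, r = 1 / ((b : ℝ) - 1) - β - β ^ 2 := ⟨_, rfl⟩
  obtain ⟨E2, hE2'⟩ : ∃ E2, E2 = zetaVal 2 - 1 - u - β := ⟨_, rfl⟩
  obtain ⟨E3, hE3'⟩ : ∃ E3, E3 = zetaVal 3 - 1 - v := ⟨_, rfl⟩
  rw [← hrr] at hr
  rw [← hE2'] at hE2
  rw [← hE3'] at hE3
  have hβ3 := pow_pos hβ0 3
  have m1 : |β / 2 * E2| ≤ β ^ 3 := by
    rw [abs_mul, abs_of_pos (by positivity)]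
    calc β / 2 * |E2| ≤ β / 2 * (2 * β ^ 2) := by gcongr
      _ = β ^ 3 := by ring
  have m2 : |β ^ 2 * E2| ≤ β ^ 3 := by
    rw [abs_mul, abs_of_pos (by positivity)]
    calc β ^ 2 * |E2| ≤ β ^ 2 * (2 * β ^ 2) := by gcongr
      _ = (2 * β) * β ^ 3 := by ring
      _ ≤ 1 * β ^ 3 := by gcongr; linarith
      _ = β ^ 3 := by ring
  have m3 : |β ^ 2 * E3| ≤ 2 * β ^ 3 := by
    rw [abs_mul, abs_of_pos (by positivity)]
    calc β ^ 2 * |E3| ≤ β ^ 2 * (2 * β) := by gcongr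
      _ = 2 * β ^ 3 := by ring
  have m4 : |β ^ 3 * (1 / 12 + 0 - v / 2 - u / 2 - β * v / 6)| ≤ 3 * β ^ 3 := by
    rw [abs_mul, abs_of_pos hβ3]
    have : |1 / 12 + 0 - v / 2 - u / 2 - β * v / 6| ≤ 3 := by
      have : 0 ≤ β * v := by positivity
      have : β * v ≤ 1 * 1 := by gcongr; linarith
      rw [abs_le]; constructor <;> linarith
    rw [mul_comm]
    gcongr
  have key : kempnerSum b {b - 1} - b * L + zetaVal 2 * β / 2
        + (3 * zetaVal 2 + zetaVal 3) * β ^ 2 / 3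
      = (kempnerSum b {b - 1} - (1 + h - 1 / ((b : ℝ) - 1) + (A + B + C + D)))
        - r + β / 2 * E2 + β ^ 2 * E2 + (β ^ 2 * E3) / 3
        + β ^ 3 * (1 / 12 + 0 - v / 2 - u / 2 - β * v / 6) := by
    rw [hrr, hE2', hE3', hA, hB, hC, hD]
    ring
  rw [key]
  rw [abs_le] at *
  constructor <;> linarith [hmain.1, hmain.2, hr.1, hr.2, m1.1, m1.2, m2.1, m2.2, m3.1, m3.2,
    m4.1, m4.2]
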